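/- arXiv:2009.07073 — 4 statements merged into one kernel-verified Lean document; each statement's English description precedes it below -/
import Mathlib

section
/- Let G be a finite simple graph and ℓ ≥ 1. A set B ⊆ V(G) is a mixed ℓ-leaky forcing set if and only if B is an (ℓ−1)-leaky forcing set (with respect to vertex leaks) such that for every set L of ℓ−1 vertex leaks and every vertex v ∈ V(G) \ B, there exist two distinct vertices x ≠ y with x→v ∈ ℱ_L(B) and y→v ∈ ℱ_L(B). -/
/-!
Zero forcing with leaks (vertex leaks, edge leaks, specified leaks, mixed leaks).

A force `u → v` is modelled as the ordered pair `(u, v) : V × V`.  All the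
leak notions are encoded by a set `P` of *prohibited* forces.
-/

variable {V : Type*}

/-- With blue set `S` and prohibited set of forces `P`, vertex `u` can force `v`:
`u` is blue, `v` is a white neighbor of `u`, every other neighbor of `u` is blue,
and the force `u → v` is not prohibited. -/
def CanForce (G : SimpleGraph V) (P : Set (V × V)) (S : Set V) (u v : V) : Prop :=
  u ∈ S ∧ v ∉ S ∧ G.Adj u v ∧ (∀ w, G.Adj u w → w ≠ v → w ∈ S) ∧ (u, v) ∉ P

/-- `Forced G P B v` means vertex `v` is eventually colored blue when the zero
forcing color change rule (avoiding the prohibited forces `P`) is applied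
exhaustively starting from the blue set `B`. -/
inductive Forced (G : SimpleGraph V) (P : Set (V × V)) (B : Set V) : V → Prop
  | init : ∀ {v : V}, v ∈ B → Forced G P B v
  | force : ∀ {u v : V}, G.Adj u v → (u, v) ∉ P → Forced G P B u →
      (∀ w, G.Adj u w → w ≠ v → Forced G P B w) → Forced G P B v

/-- `B^[∞]_P`, the set of blue vertices after exhaustively applying the zero
forcing rule with prohibited forces `P`, starting from `B`. -/
def closureSet (G : SimpleGraph V) (P : Set (V × V)) (B : Set V) : Set V :=
  {v | Forced G P B v}

/-- The prohibited forces corresponding to a set `L` of vertex leaks: a vertex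
leak may not perform any force. -/
def vertexLeaks (L : Set V) : Set (V × V) := {p | p.1 ∈ L}

/-- The prohibited forces corresponding to a set `L` of edge leaks: no force may
pass across an edge leak in either direction. -/
def edgeLeaksP (L : Set (Sym2 V)) : Set (V × V) := {p | s(p.1, p.2) ∈ L}

/-- `B` is an `ℓ`-leaky forcing set of `G`: despite any set of (at most) `ℓ`
vertex leaks, exhaustive forcing colors all of `V(G)` blue. -/
def IsLeakyForcingSet (G : SimpleGraph V) (ℓ : ℕ) (B : Set V) : Prop :=
  ∀ L : Finset V, L.card ≤ ℓ → closureSet G (vertexLeaks ↑L) B = Set.univ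

/-- `B` is an `ℓ`-edge-leaky forcing set of `G`: despite any set of (at most)
`ℓ` edge leaks, exhaustive forcing colors all of `V(G)` blue. -/
def IsEdgeLeakyForcingSet (G : SimpleGraph V) (ℓ : ℕ) (B : Set V) : Prop :=
  ∀ L : Finset (Sym2 V), ↑L ⊆ G.edgeSet → L.card ≤ ℓ →
    closureSet G (edgeLeaksP ↑L) B = Set.univ

/-- `B` is a specified `ℓ`-leaky forcing set of `G`: despite any set of (at
most) `ℓ` specified leaks (prohibited forces between adjacent vertices),
exhaustive forcing colors all of `V(G)` blue. -/
def IsSpecifiedLeakyForcingSet (G : SimpleGraph V) (ℓ : ℕ) (B : Set V) : Prop :=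
  ∀ L : Finset (V × V), (∀ p ∈ L, G.Adj p.1 p.2) → L.card ≤ ℓ →
    closureSet G (↑L) B = Set.univ

/-- `B` is a mixed `ℓ`-leaky forcing set of `G`: despite any set of (at most)
`ℓ` leaks, each a vertex leak, an edge leak, or a specified leak, exhaustive
forcing colors all of `V(G)` blue. -/
def IsMixedLeakyForcingSet (G : SimpleGraph V) (ℓ : ℕ) (B : Set V) : Prop :=
  ∀ (L₁ : Finset V) (L₂ : Finset (Sym2 V)) (L₃ : Finset (V × V)),
    ↑L₂ ⊆ G.edgeSet → (∀ p ∈ L₃, G.Adj p.1 p.2) →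
    L₁.card + L₂.card + L₃.card ≤ ℓ →
    closureSet G (vertexLeaks ↑L₁ ∪ edgeLeaksP ↑L₂ ∪ (↑L₃ : Set (V × V))) B = Set.univ

/-- A chronologically valid list of forces starting from a blue set. -/
def ValidList (G : SimpleGraph V) (P : Set (V × V)) : Set V → List (V × V) → Prop
  | _, [] => True
  | S, f :: l => CanForce G P S f.1 f.2 ∧ ValidList G P (insert f.2 S) l

/-- `F` is a forcing process (set of forces) of `B` in `G` with prohibited
forces `P`: the forces of `F` admit a chronological ordering in which each force
is valid and after applying all of them the whole graph is blue. -/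
def IsForcingProcess (G : SimpleGraph V) (P : Set (V × V)) (B : Set V)
    (F : Set (V × V)) : Prop :=
  ∃ l : List (V × V), {f | f ∈ l} = F ∧ ValidList G P B l ∧
    B ∪ Prod.snd '' F = Set.univ

/-- `B'` is obtained from `B` using `F`: `B` can color exactly `B'` blue using
only a subset of the forces in `F`, applied in a chronologically valid order. -/
def ObtainedUsing (G : SimpleGraph V) (P : Set (V × V)) (B : Set V) (F : Set (V × V))
    (B' : Set V) : Prop :=
  ∃ l : List (V × V), (∀ f ∈ l, f ∈ F) ∧ ValidList G P B l ∧
    B' = B ∪ Prod.snd '' {f | f ∈ l}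

/-- `ℱ_P(B)`: the set of forces that belong to some forcing process of `B`
(with prohibited forces `P`). -/
def potentialForces (G : SimpleGraph V) (P : Set (V × V)) (B : Set V) : Set (V × V) :=
  {f | ∃ F, IsForcingProcess G P B F ∧ f ∈ F}

/-- `Z_(ℓ)(G)`, the `ℓ`-leaky forcing number of `G`. -/
noncomputable def Zleaky (G : SimpleGraph V) (ℓ : ℕ) : ℕ :=
  sInf {n | ∃ B : Finset V, B.card = n ∧ IsLeakyForcingSet G ℓ ↑B}

/-- `Z'_(ℓ)(G)`, the `ℓ`-edge-leaky forcing number of `G`. -/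
noncomputable def ZedgeLeaky (G : SimpleGraph V) (ℓ : ℕ) : ℕ :=
  sInf {n | ∃ B : Finset V, B.card = n ∧ IsEdgeLeakyForcingSet G ℓ ↑B}

/-- `Z^s_(ℓ)(G)`, the specified `ℓ`-leaky forcing number of `G`. -/
noncomputable def Zspec (G : SimpleGraph V) (ℓ : ℕ) : ℕ :=
  sInf {n | ∃ B : Finset V, B.card = n ∧ IsSpecifiedLeakyForcingSet G ℓ ↑B}

/-- `Z^m_(ℓ)(G)`, the mixed `ℓ`-leaky forcing number of `G`. -/
noncomputable def Zmixed (G : SimpleGraph V) (ℓ : ℕ) : ℕ :=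
  sInf {n | ∃ B : Finset V, B.card = n ∧ IsMixedLeakyForcingSet G ℓ ↑B}

/-- Two sets of specified leaks on `V(G)` are isomorphic if some bijection of
the vertex set matches them up. -/
def LeaksIso (L₁ L₂ : Set (V × V)) : Prop :=
  ∃ φ : V ≃ V, ∀ x y : V, (x, y) ∈ L₁ ↔ (φ x, φ y) ∈ L₂

/-- `B` is an `L`-leaky forcing set of `G`: `B` colors all of `V(G)` blue
despite any set of specified leaks isomorphic to a subset of `L`. -/
def IsLLeakyForcingSet (G : SimpleGraph V) (L : Set (V × V)) (B : Set V) : Prop :=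
  ∀ L' : Set (V × V), (∃ L₂ ⊆ L, LeaksIso L' L₂) → closureSet G L' B = Set.univ

/-- `L` is a set of independent leaks: `|T(L)| = |L|` and `T(L) ∩ H(L) = ∅`. -/
def IsIndependentLeaks [DecidableEq V] (L : Finset (V × V)) : Prop :=
  (L.image Prod.fst).card = L.card ∧ Disjoint (L.image Prod.fst) (L.image Prod.snd)

/-- `I(L)`: the size of a largest set of independent leaks contained in `L`. -/
noncomputable def maxIndepLeaks [DecidableEq V] (L : Finset (V × V)) : ℕ :=
  sSup {n | ∃ M ⊆ L, IsIndependentLeaks M ∧ M.card = n}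

/-- `Z_L(G)`, the `L`-leaky forcing number of `G`. -/
noncomputable def ZLleaky (G : SimpleGraph V) (L : Set (V × V)) : ℕ :=
  sInf {n | ∃ B : Finset V, B.card = n ∧ IsLLeakyForcingSet G L ↑B}

/-!
The final blue set is the least superset of `B` from which no further force is possible, so `B`
colors all of `V` iff `V` is the only stalled superset of `B`.

If `S` is stalled under mixed leaks, only leaks `u → w` with `u ∈ S` and `w ∉ S` matter, and each
vertex, edge or specified leak blocks such forces from a single tail `u`. Turning these tails into
vertex leaks keeps `S` stalled, so mixed leaks are no stronger than equally many vertex leaks.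

Suppose next that `B` is `ℓ`-leaky and `B ⊆ S ≠ V` is stalled under `ℓ + 1` vertex leaks. Lifting
the leak `u` leaves `ℓ` leaks, so `S` is no longer stalled and its only possible force is some
`u → w`. Every forcing process then leaves `S` through `u → w`, so `w` cannot have two potential
forcers.
Conversely, if `x → v` is potential, making `x` a leak as well exhibits a second forcer of `v`.
-/

section

variable {G : SimpleGraph V} {P Q : Set (V × V)} {B S : Set V} {u v w x : V}
  {f g : V × V} {F : Set (V × V)} {l : List (V × V)} {k ℓ : ℕ}

namespace CanForce

theorem anti (hPQ : P ⊆ Q) (h : CanForce G Q S u v) : CanForce G P S u v :=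
  ⟨h.1, h.2.1, h.2.2.1, h.2.2.2.1, fun hP => h.2.2.2.2 (hPQ hP)⟩

theorem mono (hBS : B ⊆ S) (hv : v ∉ S) (h : CanForce G P B u v) : CanForce G P S u v :=
  ⟨hBS h.1, hv, h.2.2.1, fun w huw hwv => hBS (h.2.2.2.1 w huw hwv), h.2.2.2.2⟩

theorem target_unique (hv : CanForce G P S u v) (hw : CanForce G Q S u w) : v = w := by
  by_contra hvw
  exact hv.2.1 (hw.2.2.2.1 v hv.2.2.1 hvw)

end CanForce

/-- The blue set `S` is stalled under the prohibited forces `P`: the color change rule cannot be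
applied to it. -/
def IsStalled (G : SimpleGraph V) (P : Set (V × V)) (S : Set V) : Prop :=
  ∀ u v, ¬ CanForce G P S u v

theorem IsStalled.of_forall_crossing (hS : IsStalled G P S)
    (hPQ : ∀ u ∈ S, ∀ w ∉ S, (u, w) ∈ P → (u, w) ∈ Q) : IsStalled G Q S := by
  rintro u w ⟨hu, hw, hadj, hblue, hQ⟩
  exact hS u w ⟨hu, hw, hadj, hblue, fun hP => hQ (hPQ u hu w hw hP)⟩

theorem vertexLeaks_mono {L M : Set V} (hLM : L ⊆ M) : vertexLeaks L ⊆ vertexLeaks M :=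
  fun _ h => hLM h

theorem subset_closureSet : B ⊆ closureSet G P B :=
  fun _ => Forced.init

theorem isStalled_closureSet : IsStalled G P (closureSet G P B) :=
  fun _ _ ⟨hu, hv, hadj, hblue, hP⟩ => hv (Forced.force hadj hP hu hblue)

theorem closureSet_subset (hBS : B ⊆ S) (hS : IsStalled G P S) : closureSet G P B ⊆ S := by
  intro v hv
  induction hv with
  | init hv => exact hBS hv
  | force hadj hP _ _ hu hblue =>
    by_contra hvS
    exact hS _ _ ⟨hu, hvS, hadj, hblue, hP⟩

theorem closureSet_eq_univ_iff :
    closureSet G P B = Set.univ ↔ ∀ S, B ⊆ S → IsStalled G P S → S = Set.univ :=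
  ⟨fun h _ hBS hS => Set.univ_subset_iff.1 (h ▸ closureSet_subset hBS hS),
    fun h => h _ subset_closureSet isStalled_closureSet⟩

namespace ValidList

theorem anti (hPQ : P ⊆ Q) (h : ValidList G Q S l) : ValidList G P S l := by
  induction l generalizing S with
  | nil => trivial
  | cons f l ih => exact ⟨h.1.anti hPQ, ih h.2⟩

theorem notMem_prohibited (h : ValidList G P S l) (hf : f ∈ l) : f ∉ P := by
  induction l generalizing S with
  | nil => cases hf
  | cons g l ih =>
    rcases List.mem_cons.1 hf with rfl | hf
    · exact h.1.2.2.2.2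
    · exact ih h.2 hf

theorem target_notMem (h : ValidList G P S l) (hf : f ∈ l) : f.2 ∉ S := by
  induction l generalizing S with
  | nil => cases hf
  | cons g l ih =>
    rcases List.mem_cons.1 hf with rfl | hf
    · exact h.1.2.1
    · exact fun hfS => ih h.2 hf (Set.mem_insert_of_mem _ hfS)

theorem eq_of_target_eq (h : ValidList G P S l) (hf : f ∈ l) (hg : g ∈ l) (hfg : f.2 = g.2) :
    f = g := by
  induction l generalizing S with
  | nil => cases hf
  | cons e l ih =>
    have target_ne : ∀ f ∈ l, f.2 ≠ e.2 := fun f hf he =>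
      target_notMem h.2 hf (he ▸ Set.mem_insert _ _)
    rcases List.mem_cons.1 hf with rfl | hfl <;> rcases List.mem_cons.1 hg with rfl | hgl
    · rfl
    · exact absurd hfg.symm (target_ne g hgl)
    · exact absurd hfg (target_ne f hfl)
    · exact ih h.2 hfl hgl

/-- The first force of the list whose target lies outside `S` is also possible from `S`. -/
theorem exists_mem_canForce (h : ValidList G P B l) (hBS : B ⊆ S) (hf : f ∈ l) (hfS : f.2 ∉ S) :
    ∃ g ∈ l, CanForce G P S g.1 g.2 := by
  induction l generalizing B with
  | nil => cases hf
  | cons e l ih =>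
    by_cases heS : e.2 ∈ S
    · have hfl : f ∈ l := (List.mem_cons.1 hf).resolve_left fun hfe => hfS (hfe ▸ heS)
      obtain ⟨g, hg, hgS⟩ := ih h.2 (Set.insert_subset heS hBS) hfl
      exact ⟨g, List.mem_cons_of_mem e hg, hgS⟩
    · exact ⟨e, List.mem_cons_self, h.1.mono hBS heS⟩

end ValidList

theorem IsForcingProcess.insert (huv : CanForce G P S u v)
    (hF : IsForcingProcess G P (insert v S) F) : IsForcingProcess G P S (insert (u, v) F) := by
  obtain ⟨l, rfl, hl, hcover⟩ := hF
  refine ⟨(u, v) :: l, by ext; simp, ⟨huv, hl⟩, ?_⟩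
  rw [Set.image_insert_eq, Set.union_insert, ← Set.insert_union, hcover]

theorem IsForcingProcess.exists_mem_of_notMem (hF : IsForcingProcess G P B F) (hv : v ∉ B) :
    ∃ u, (u, v) ∈ F := by
  obtain ⟨_, -, -, hcover⟩ := hF
  have hvBF : v ∈ B ∪ Prod.snd '' F := hcover ▸ Set.mem_univ v
  obtain ⟨⟨u, _⟩, huF, rfl⟩ := hvBF.resolve_left hv
  exact ⟨u, huF⟩

theorem exists_isForcingProcess (hS : Sᶜ.Finite) (h : closureSet G P S = Set.univ) :
    ∃ F, IsForcingProcess G P S F := by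
  induction hn : Sᶜ.ncard generalizing S with
  | zero =>
    have hS_univ : S = Set.univ := Set.compl_empty_iff.1 ((Set.ncard_eq_zero hS).1 hn)
    exact ⟨∅, [], by simp, trivial, by simp [hS_univ]⟩
  | succ n ih =>
    obtain ⟨u, v, huv⟩ : ∃ u v, CanForce G P S u v := by
      by_contra! hstalled
      simp [closureSet_eq_univ_iff.1 h S subset_rfl hstalled] at hn
    have hcompl : (insert v S)ᶜ = Sᶜ \ {v} := by
      rw [← Set.union_singleton, Set.compl_union, Set.sdiff_eq]
    have hclosure : closureSet G P (insert v S) = Set.univ :=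
      closureSet_eq_univ_iff.2 fun T hT =>
        closureSet_eq_univ_iff.1 h T ((Set.subset_insert v S).trans hT)
    have hcard : (insert v S)ᶜ.ncard = n := by
      rw [hcompl, Set.ncard_sdiff_singleton_of_mem huv.2.1, hn, Nat.add_sub_cancel]
    obtain ⟨F, hF⟩ := ih (hcompl ▸ hS.sdiff) hclosure hcard
    exact ⟨_, hF.insert huv⟩

theorem potentialForces_anti (hPQ : P ⊆ Q) : potentialForces G Q B ⊆ potentialForces G P B := by
  rintro f ⟨F, ⟨l, hlF, hl, hcover⟩, hf⟩
  exact ⟨F, ⟨l, hlF, hl.anti hPQ, hcover⟩, hf⟩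

theorem notMem_of_mem_potentialForces (hf : f ∈ potentialForces G P B) : f ∉ P := by
  obtain ⟨_, ⟨l, rfl, hl, -⟩, hfl⟩ := hf
  exact hl.notMem_prohibited hfl

theorem exists_mem_potentialForces (hB : Bᶜ.Finite) (h : closureSet G P B = Set.univ)
    (hv : v ∉ B) : ∃ u, (u, v) ∈ potentialForces G P B := by
  obtain ⟨F, hF⟩ := exists_isForcingProcess hB h
  obtain ⟨u, huF⟩ := hF.exists_mem_of_notMem hv
  exact ⟨u, F, hF, huF⟩

theorem eq_of_mem_potentialForces (hBS : B ⊆ S) (hu : ∀ a b, CanForce G P S a b → a = u)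
    (huw : CanForce G P S u w) (hxw : (x, w) ∈ potentialForces G P B) : x = u := by
  obtain ⟨_, ⟨l, rfl, hl, -⟩, hxwl⟩ := hxw
  obtain ⟨⟨a, b⟩, habl, hab⟩ := hl.exists_mem_canForce hBS hxwl huw.2.1
  obtain rfl : a = u := hu a b hab
  obtain rfl : b = w := hab.target_unique huw
  exact congrArg Prod.fst (hl.eq_of_target_eq hxwl habl rfl)

theorem exists_forall_inner_end_eq (S : Set V) (e : Sym2 V) :
    ∃ a, ∀ u ∈ S, ∀ w ∉ S, e = s(u, w) → u = a := by
  induction e with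
  | h a b =>
    by_cases ha : a ∈ S
    · refine ⟨a, fun u _ w hw he => ?_⟩
      rcases Sym2.eq_iff.1 he with ⟨hau, -⟩ | ⟨haw, -⟩
      · exact hau.symm
      · exact absurd (haw ▸ ha) hw
    · refine ⟨b, fun u hu w _ he => ?_⟩
      rcases Sym2.eq_iff.1 he with ⟨hau, -⟩ | ⟨-, hbu⟩
      · exact absurd (hau ▸ hu) ha
      · exact hbu.symm

theorem exists_vertexLeaks_of_crossing (S : Set V) (L₁ : Finset V) (L₂ : Finset (Sym2 V))
    (L₃ : Finset (V × V)) :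
    ∃ T : Finset V, T.card ≤ L₁.card + L₂.card + L₃.card ∧ ∀ u ∈ S, ∀ w ∉ S,
      (u, w) ∈ vertexLeaks ↑L₁ ∪ edgeLeaksP ↑L₂ ∪ (↑L₃ : Set (V × V)) →
        (u, w) ∈ vertexLeaks ↑T := by
  classical
  choose inner hinner using exists_forall_inner_end_eq S
  refine ⟨L₁ ∪ L₂.image inner ∪ L₃.image Prod.fst, ?_, fun u hu w hw huw => ?_⟩
  · calc (L₁ ∪ L₂.image inner ∪ L₃.image Prod.fst).card
        ≤ (L₁ ∪ L₂.image inner).card + (L₃.image Prod.fst).card := Finset.card_union_le _ _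
      _ ≤ L₁.card + (L₂.image inner).card + (L₃.image Prod.fst).card := by
          gcongr; exact Finset.card_union_le _ _
      _ ≤ L₁.card + L₂.card + L₃.card := by
          gcongr <;> exact Finset.card_image_le
  · change u ∈ L₁ ∪ L₂.image inner ∪ L₃.image Prod.fst
    rcases huw with (hvertex | hedge) | hspecified
    · exact Finset.mem_union_left _ (Finset.mem_union_left _ hvertex)
    · exact Finset.mem_union_left _ (Finset.mem_union_right _
        (Finset.mem_image.2 ⟨s(u, w), hedge, (hinner _ u hu w hw rfl).symm⟩))
    · exact Finset.mem_union_right _ (Finset.mem_image_of_mem Prod.fst hspecified)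

theorem isMixedLeakyForcingSet_iff_isLeakyForcingSet :
    IsMixedLeakyForcingSet G ℓ B ↔ IsLeakyForcingSet G ℓ B := by
  refine ⟨fun h L hL => ?_, fun h L₁ L₂ L₃ _ _ hcard => ?_⟩
  · simpa [edgeLeaksP] using h L ∅ ∅ (by simp) (by simp) (by simpa using hL)
  · refine closureSet_eq_univ_iff.2 fun S hBS hS => ?_
    obtain ⟨T, hT, hcrossing⟩ := exists_vertexLeaks_of_crossing S L₁ L₂ L₃
    exact closureSet_eq_univ_iff.1 (h T (hT.trans hcard)) S hBS (hS.of_forall_crossing hcrossing)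

namespace IsLeakyForcingSet

theorem anti (hk : k ≤ ℓ) (h : IsLeakyForcingSet G ℓ B) : IsLeakyForcingSet G k B :=
  fun L hL => h L (hL.trans hk)

theorem exists_ne_mem_potentialForces (h : IsLeakyForcingSet G (ℓ + 1) B) (hB : Bᶜ.Finite)
    {L : Finset V} (hL : L.card ≤ ℓ) (hv : v ∉ B) :
    ∃ x y : V, x ≠ y ∧ (x, v) ∈ potentialForces G (vertexLeaks ↑L) B ∧
      (y, v) ∈ potentialForces G (vertexLeaks ↑L) B := by
  classical
  obtain ⟨x, hx⟩ := exists_mem_potentialForces hB (h L (by omega)) hv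
  have hcard : (insert x L).card ≤ ℓ + 1 := (L.card_insert_le x).trans (by omega)
  obtain ⟨y, hy⟩ := exists_mem_potentialForces hB (h (insert x L) hcard) hv
  have hy_notMem : y ∉ insert x L := notMem_of_mem_potentialForces hy
  have hsub : (L : Set V) ⊆ ↑(insert x L) := Finset.coe_subset.2 (Finset.subset_insert x L)
  refine ⟨x, y, ?_, hx, potentialForces_anti (vertexLeaks_mono hsub) hy⟩
  rintro rfl
  exact hy_notMem (Finset.mem_insert_self _ _)

theorem succ_of_exists_ne_mem_potentialForces (h : IsLeakyForcingSet G ℓ B)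
    (htwo : ∀ L : Finset V, L.card ≤ ℓ → ∀ v ∉ B,
      ∃ x y : V, x ≠ y ∧ (x, v) ∈ potentialForces G (vertexLeaks ↑L) B ∧
        (y, v) ∈ potentialForces G (vertexLeaks ↑L) B) :
    IsLeakyForcingSet G (ℓ + 1) B := by
  classical
  intro L hL
  refine closureSet_eq_univ_iff.2 fun S hBS hS => ?_
  obtain rfl | ⟨u, hu⟩ := L.eq_empty_or_nonempty
  · exact closureSet_eq_univ_iff.1 (h ∅ (by simp)) S hBS hS
  have hcard : (L.erase u).card ≤ ℓ := by rw [Finset.card_erase_of_mem hu]; omega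
  have source_eq : ∀ a b, CanForce G (vertexLeaks ↑(L.erase u)) S a b → a = u := by
    rintro a b ⟨ha, hb, hadj, hblue, hleak⟩
    by_contra hau
    exact hS a b ⟨ha, hb, hadj, hblue, fun haL => hleak (Finset.mem_erase.2 ⟨hau, haL⟩)⟩
  by_contra hS_ne
  obtain ⟨a, w, haw⟩ : ∃ a w, CanForce G (vertexLeaks ↑(L.erase u)) S a w := by
    by_contra! hstalled
    exact hS_ne (closureSet_eq_univ_iff.1 (h _ hcard) S hBS hstalled)
  obtain rfl : a = u := source_eq a w haw
  obtain ⟨x, y, hxy, hx, hy⟩ := htwo _ hcard w fun hwB => haw.2.1 (hBS hwB)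
  have hxa : x = a := eq_of_mem_potentialForces hBS source_eq haw hx
  have hya : y = a := eq_of_mem_potentialForces hBS source_eq haw hy
  exact hxy (hxa.trans hya.symm)

end IsLeakyForcingSet

end

theorem statement11_general (G : SimpleGraph V) (ℓ : ℕ) (hℓ : 1 ≤ ℓ) {B : Set V}
    (hB : Bᶜ.Finite) :
    IsMixedLeakyForcingSet G ℓ B ↔
      (IsLeakyForcingSet G (ℓ - 1) B ∧
        ∀ L : Finset V, L.card ≤ ℓ - 1 → ∀ v : V, v ∉ B →
          ∃ x y : V, x ≠ y ∧ (x, v) ∈ potentialForces G (vertexLeaks ↑L) B ∧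
            (y, v) ∈ potentialForces G (vertexLeaks ↑L) B) := by
  obtain ⟨k, rfl⟩ : ∃ k, ℓ = k + 1 := Nat.exists_eq_add_of_le' hℓ
  rw [isMixedLeakyForcingSet_iff_isLeakyForcingSet, Nat.add_sub_cancel]
  exact ⟨fun h => ⟨h.anti k.le_succ, fun _ hL _ hv => h.exists_ne_mem_potentialForces hB hL hv⟩,
    fun ⟨h, htwo⟩ => h.succ_of_exists_ne_mem_potentialForces htwo⟩

/-- `B` is a mixed `ℓ`-leaky forcing set iff `B` is an
`(ℓ-1)`-leaky forcing set (w.r.t. vertex leaks) such that for every set `L` of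
`ℓ-1` vertex leaks and every `v ∈ V(G) \ B` there are two distinct forces
`x→v, y→v ∈ ℱ_L(B)`. -/
theorem statement11 [Fintype V] [DecidableEq V] (G : SimpleGraph V) (ℓ : ℕ)
    (hℓ : 1 ≤ ℓ) (B : Set V) :
    IsMixedLeakyForcingSet G ℓ B ↔
      (IsLeakyForcingSet G (ℓ - 1) B ∧
        ∀ L : Finset V, L.card ≤ ℓ - 1 → ∀ v : V, v ∉ B →
          ∃ x y : V, x ≠ y ∧ (x, v) ∈ potentialForces G (vertexLeaks ↑L) B ∧
            (y, v) ∈ potentialForces G (vertexLeaks ↑L) B) :=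
  statement11_general G ℓ hℓ Bᶜ.toFinite
end

section
/- For any finite simple graph G and any ℓ ≥ 0, Z_(ℓ)(G) = Z^m_(ℓ)(G); moreover, a set B ⊆ V(G) is an ℓ-leaky forcing set if and only if B is a mixed ℓ-leaky forcing set. -/
/-!
Zero forcing with leaks (vertex leaks, edge leaks, specified leaks, mixed leaks).

A force `u → v` is modelled as the ordered pair `(u, v) : V × V`.  All the
leak notions are encoded by a set `P` of *prohibited* forces.
-/

variable {V : Type*}

/-!
Only prohibited forces `u → v` with `u` blue and `v` white in the final coloring can matter: a
set of leaks prohibiting at least those forces stops at the same coloring or earlier.  The tail of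
such a force is determined by the leak causing it: for an edge leak it is the unique endpoint that
ends up blue.  Replacing every leak by a vertex leak at this tail therefore uses no more leaks and
colors no more vertices.
-/

section

variable {G : SimpleGraph V} {B : Set V}

theorem closureSet_subset_of_inter_prod_compl_subset {P Q : Set (V × V)}
    (h : Q ∩ closureSet G Q B ×ˢ (closureSet G Q B)ᶜ ⊆ P) :
    closureSet G P B ⊆ closureSet G Q B := by
  intro v hv
  induction hv with
  | init hB => exact .init hB
  | @force u v hadj hP _ _ hu hnbr =>
    by_contra hv
    have hQ : (u, v) ∉ Q := fun hQ => hP (h ⟨hQ, hu, hv⟩)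
    exact hv (.force hadj hQ hu hnbr)

theorem exists_tail_of_crossing_edge (S : Set V) (e : Sym2 V) :
    ∃ t, ∀ u ∈ S, ∀ v ∉ S, e = s(u, v) → t = u := by
  induction e with
  | h x y =>
    by_cases hx : x ∈ S
    · exact ⟨x, by grind [Sym2.eq_iff]⟩
    · exact ⟨y, by grind [Sym2.eq_iff]⟩

theorem exists_edgeLeaksP_inter_prod_compl_subset_vertexLeaks (S : Set V)
    (L : Finset (Sym2 V)) :
    ∃ T : Finset V, T.card ≤ L.card ∧ edgeLeaksP ↑L ∩ S ×ˢ Sᶜ ⊆ vertexLeaks ↑T := by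
  classical
  choose tail h_tail using exists_tail_of_crossing_edge S
  refine ⟨L.image tail, Finset.card_image_le, ?_⟩
  rintro ⟨u, v⟩ ⟨he, hu, hv⟩
  exact Finset.mem_image.2 ⟨s(u, v), he, h_tail _ u hu v hv rfl⟩

theorem exists_subset_vertexLeaks (L : Finset (V × V)) :
    ∃ T : Finset V, T.card ≤ L.card ∧ (L : Set (V × V)) ⊆ vertexLeaks ↑T := by
  classical
  exact ⟨L.image Prod.fst, Finset.card_image_le, fun _ => Finset.mem_image_of_mem Prod.fst⟩

theorem IsLeakyForcingSet.isMixedLeakyForcingSet {ℓ : ℕ} (h : IsLeakyForcingSet G ℓ B) :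
    IsMixedLeakyForcingSet G ℓ B := by
  classical
  intro L₁ L₂ L₃ _ _ hcard
  set P := vertexLeaks (L₁ : Set V) ∪ edgeLeaksP ↑L₂ ∪ (L₃ : Set (V × V))
  obtain ⟨T₂, hT₂_card, hT₂⟩ :=
    exists_edgeLeaksP_inter_prod_compl_subset_vertexLeaks (closureSet G P B) L₂
  obtain ⟨T₃, hT₃_card, hT₃⟩ := exists_subset_vertexLeaks L₃
  have hT_card : (L₁ ∪ T₂ ∪ T₃).card ≤ ℓ := by
    have := Finset.card_union_le (L₁ ∪ T₂) T₃
    have := Finset.card_union_le L₁ T₂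
    omega
  have h_crossing : P ∩ closureSet G P B ×ˢ (closureSet G P B)ᶜ ⊆
      vertexLeaks ↑(L₁ ∪ T₂ ∪ T₃) := by
    rw [Finset.coe_union, Finset.coe_union]
    rintro p ⟨(hp | hp) | hp, h_cross⟩
    · exact .inl (.inl hp)
    · exact .inl (.inr (hT₂ ⟨hp, h_cross⟩))
    · exact .inr (hT₃ hp)
  exact Set.eq_univ_of_univ_subset
    ((h _ hT_card).ge.trans (closureSet_subset_of_inter_prod_compl_subset h_crossing))

theorem IsMixedLeakyForcingSet.isLeakyForcingSet {ℓ : ℕ} (h : IsMixedLeakyForcingSet G ℓ B) :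
    IsLeakyForcingSet G ℓ B := by
  intro L hL
  simpa [edgeLeaksP] using h L ∅ ∅ (by simp) (by simp) (by simpa using hL)

theorem isLeakyForcingSet_iff_isMixedLeakyForcingSet {ℓ : ℕ} :
    IsLeakyForcingSet G ℓ B ↔ IsMixedLeakyForcingSet G ℓ B :=
  ⟨IsLeakyForcingSet.isMixedLeakyForcingSet, IsMixedLeakyForcingSet.isLeakyForcingSet⟩

end

theorem statement12_general (G : SimpleGraph V) (ℓ : ℕ) :
    Zleaky G ℓ = Zmixed G ℓ ∧
      ∀ B : Set V, IsLeakyForcingSet G ℓ B ↔ IsMixedLeakyForcingSet G ℓ B := by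
  refine ⟨?_, fun _ => isLeakyForcingSet_iff_isMixedLeakyForcingSet⟩
  simp only [Zleaky, Zmixed, isLeakyForcingSet_iff_isMixedLeakyForcingSet]

/-- `Z_(ℓ)(G) = Z^m_(ℓ)(G)`, and `B` is an `ℓ`-leaky forcing
set iff `B` is a mixed `ℓ`-leaky forcing set. -/
theorem statement12 [Fintype V] [DecidableEq V] (G : SimpleGraph V) (ℓ : ℕ) :
    Zleaky G ℓ = Zmixed G ℓ ∧
      ∀ B : Set V, IsLeakyForcingSet G ℓ B ↔ IsMixedLeakyForcingSet G ℓ B :=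
  statement12_general G ℓ
end

section
/- Let G be a finite simple graph and let L be a set of specified leaks on V(G) with I(L) = 1. Then a set B ⊆ V(G) is an L-leaky forcing set if and only if B is a specified 1-leaky forcing set. -/
/-!
Zero forcing with leaks (vertex leaks, edge leaks, specified leaks, mixed leaks).

A force `u → v` is modelled as the ordered pair `(u, v) : V × V`.  All the
leak notions are encoded by a set `P` of *prohibited* forces.
-/

variable {V : Type*}

/-!
When forcing with leaks `P` stalls, the only leaks that matter are those standing in the way of an
otherwise legal force. The tails of these leaks are blue and their heads white, and each tail has
its head as its unique white neighbor, so these leaks are independent. Hence an adversary playing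
copies of `L` never gains from more than `I(L)` leaks. Conversely, an independent leak is not a
loop, and any two non-loop ordered pairs are isomorphic as sets of leaks.
-/

section StalledLeaks

variable {G : SimpleGraph V} {P Q : Set (V × V)} {B : Set V}

theorem closureSet_anti (h : P ⊆ Q) : closureSet G Q B ⊆ closureSet G P B := by
  intro v hv
  induction hv with
  | init hB => exact .init hB
  | force hadj hQ _ _ ihu ihw => exact .force hadj (fun hP => hQ (h hP)) ihu ihw

/-- The leaks in `P` that block an otherwise legal force once forcing from `B` with leaks `P` has
come to a halt. -/
def stalledLeaks (G : SimpleGraph V) (P : Set (V × V)) (B : Set V) : Set (V × V) :=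
  {p ∈ P | CanForce G ∅ (closureSet G P B) p.1 p.2}

theorem stalledLeaks_subset : stalledLeaks G P B ⊆ P :=
  Set.sep_subset _ _

theorem closureSet_stalledLeaks :
    closureSet G (stalledLeaks G P B) B = closureSet G P B := by
  refine Set.Subset.antisymm (fun v hv => ?_) (closureSet_anti stalledLeaks_subset)
  induction hv with
  | init hB => exact .init hB
  | @force u v hadj hunstalled _ _ hu hw =>
    by_contra hv
    have hleak : (u, v) ∈ P := by
      by_contra hP
      exact hv (.force hadj hP hu hw)
    exact hunstalled ⟨hleak, hu, hv, hadj, hw, Set.notMem_empty _⟩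

theorem injOn_fst_stalledLeaks : Set.InjOn Prod.fst (stalledLeaks G P B) := by
  rintro ⟨u, v⟩ ⟨-, -, -, -, hblue, -⟩ ⟨_, w⟩ ⟨-, -, hw, hadj, -⟩ rfl
  have hwv : w = v := by
    by_contra hne
    exact hw (hblue w hadj hne)
  rw [hwv]

theorem fst_ne_snd_of_mem_stalledLeaks {p q : V × V} (hp : p ∈ stalledLeaks G P B)
    (hq : q ∈ stalledLeaks G P B) : p.1 ≠ q.2 :=
  ne_of_mem_of_not_mem hp.2.1 hq.2.2.1

end StalledLeaks

section IndependentLeaks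

variable [DecidableEq V] {L M : Finset (V × V)}

theorem isIndependentLeaks_iff :
    IsIndependentLeaks M ↔
      Set.InjOn Prod.fst (M : Set (V × V)) ∧ ∀ p ∈ M, ∀ q ∈ M, p.1 ≠ q.2 := by
  rw [IsIndependentLeaks, Finset.card_image_iff, Finset.disjoint_iff_ne]
  simp only [Finset.forall_mem_image]

theorem isIndependentLeaks_of_subset_stalledLeaks {G : SimpleGraph V} {P : Set (V × V)}
    {B : Set V} (hM : ↑M ⊆ stalledLeaks G P B) : IsIndependentLeaks M :=
  isIndependentLeaks_iff.2 ⟨injOn_fst_stalledLeaks.mono hM, fun _ hp _ hq =>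
    fst_ne_snd_of_mem_stalledLeaks (hM hp) (hM hq)⟩

theorem IsIndependentLeaks.map (hM : IsIndependentLeaks M) {W : Type*} [DecidableEq W]
    (φ : V ↪ W) : IsIndependentLeaks (M.map (φ.prodMap φ)) := by
  obtain ⟨hinj, hne⟩ := isIndependentLeaks_iff.1 hM
  refine isIndependentLeaks_iff.2 ⟨?_, ?_⟩
  · rw [Finset.coe_map]
    rintro _ ⟨p, hp, rfl⟩ _ ⟨q, hq, rfl⟩ heq
    rw [hinj hp hq (φ.injective heq)]
  · simp only [Finset.forall_mem_map]
    exact fun p hp q hq => φ.injective.ne (hne p hp q hq)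

theorem bddAbove_card_isIndependentLeaks (L : Finset (V × V)) :
    BddAbove {n | ∃ M ⊆ L, IsIndependentLeaks M ∧ M.card = n} := by
  refine ⟨L.card, ?_⟩
  rintro _ ⟨M, hML, -, rfl⟩
  exact Finset.card_le_card hML

theorem IsIndependentLeaks.card_le_maxIndepLeaks (hM : IsIndependentLeaks M) (hML : M ⊆ L) :
    M.card ≤ maxIndepLeaks L :=
  le_csSup (bddAbove_card_isIndependentLeaks L) ⟨M, hML, hM, rfl⟩

theorem exists_isIndependentLeaks_card_eq_maxIndepLeaks (L : Finset (V × V)) :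
    ∃ M ⊆ L, IsIndependentLeaks M ∧ M.card = maxIndepLeaks L := by
  refine Nat.sSup_mem ?_ (bddAbove_card_isIndependentLeaks L)
  have hempty : IsIndependentLeaks (∅ : Finset (V × V)) := isIndependentLeaks_iff.2 (by simp)
  exact ⟨0, ∅, Finset.empty_subset L, hempty, Finset.card_empty⟩

theorem exists_mem_fst_ne_snd_of_maxIndepLeaks_pos (hL : 0 < maxIndepLeaks L) :
    ∃ p ∈ L, p.1 ≠ p.2 := by
  obtain ⟨M, hML, hM, hcard⟩ := exists_isIndependentLeaks_card_eq_maxIndepLeaks L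
  obtain ⟨p, hp⟩ := Finset.card_pos.1 (hcard ▸ hL)
  exact ⟨p, hML hp, (isIndependentLeaks_iff.1 hM).2 p hp p hp⟩

end IndependentLeaks

section LeaksIso

theorem LeaksIso.finite {L₁ L₂ : Set (V × V)} (h : LeaksIso L₁ L₂) (hfin : L₂.Finite) :
    L₁.Finite := by
  obtain ⟨φ, hφ⟩ := h
  exact hfin.of_injOn (fun p hp => (hφ p.1 p.2).1 hp) (φ.prodCongr φ).injective.injOn

theorem leaksIso_singleton {p q : V × V} (hp : p.1 ≠ p.2) (hq : q.1 ≠ q.2) :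
    LeaksIso {p} {q} := by
  obtain ⟨φ, hfst, hsnd⟩ := MulAction.is_two_pretransitive_iff.1
    (Equiv.Perm.isMultiplyPretransitive V 2) hp hq
  rw [Equiv.Perm.smul_def] at hfst hsnd
  refine ⟨φ, fun x y => ?_⟩
  simp only [Set.mem_singleton_iff, Prod.ext_iff, ← hfst, ← hsnd, φ.injective.eq_iff]

theorem IsIndependentLeaks.card_le_maxIndepLeaks_of_leaksIso [DecidableEq V]
    {L M : Finset (V × V)} {L₁ L₂ : Set (V × V)} (hM : IsIndependentLeaks M) (hML₁ : ↑M ⊆ L₁)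
    (hiso : LeaksIso L₁ L₂) (hL₂L : L₂ ⊆ ↑L) : M.card ≤ maxIndepLeaks L := by
  obtain ⟨φ, hφ⟩ := hiso
  rw [← Finset.card_map (φ.toEmbedding.prodMap φ.toEmbedding)]
  refine (hM.map φ.toEmbedding).card_le_maxIndepLeaks fun _ hp => ?_
  obtain ⟨q, hq, rfl⟩ := Finset.mem_map.1 hp
  exact hL₂L ((hφ q.1 q.2).1 (hML₁ hq))

end LeaksIso

section LeakyForcing

variable [DecidableEq V] {G : SimpleGraph V} {L : Finset (V × V)} {B : Set V}

theorem IsSpecifiedLeakyForcingSet.isLLeakyForcingSet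
    (h : IsSpecifiedLeakyForcingSet G (maxIndepLeaks L) B) : IsLLeakyForcingSet G ↑L B := by
  rintro P ⟨L₂, hL₂L, hiso⟩
  have hfin : (stalledLeaks G P B).Finite :=
    (hiso.finite (L.finite_toSet.subset hL₂L)).subset stalledLeaks_subset
  obtain ⟨M, hM⟩ := hfin.exists_finset_coe
  have hadj : ∀ p ∈ M, G.Adj p.1 p.2 := fun p hp => (hM.subset hp).2.2.2.1
  have hcard : M.card ≤ maxIndepLeaks L :=
    (isIndependentLeaks_of_subset_stalledLeaks hM.subset).card_le_maxIndepLeaks_of_leaksIso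
      (hM.subset.trans stalledLeaks_subset) hiso hL₂L
  rw [← closureSet_stalledLeaks, ← hM]
  exact h M hadj hcard

theorem IsLLeakyForcingSet.isSpecifiedLeakyForcingSet_one (h : IsLLeakyForcingSet G ↑L B)
    (hL : 0 < maxIndepLeaks L) : IsSpecifiedLeakyForcingSet G 1 B := by
  intro M hadj hcard
  rcases M.eq_empty_or_nonempty with rfl | hne
  · exact h _ ⟨∅, Set.empty_subset _, Equiv.refl V, by simp⟩
  · obtain ⟨p, rfl⟩ := Finset.card_eq_one.1 (hcard.antisymm hne.card_pos)
    obtain ⟨q, hqL, hq⟩ := exists_mem_fst_ne_snd_of_maxIndepLeaks_pos hL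
    have hp : p.1 ≠ p.2 := (hadj p (Finset.mem_singleton_self p)).ne
    rw [Finset.coe_singleton]
    exact h _ ⟨{q}, Set.singleton_subset_iff.2 hqL, leaksIso_singleton hp hq⟩

end LeakyForcing

theorem statement14_general [DecidableEq V] (G : SimpleGraph V) (L : Finset (V × V))
    (hI : maxIndepLeaks L = 1) (B : Set V) :
    IsLLeakyForcingSet G (↑L) B ↔ IsSpecifiedLeakyForcingSet G 1 B :=
  ⟨fun h => h.isSpecifiedLeakyForcingSet_one (by omega),
    fun h => IsSpecifiedLeakyForcingSet.isLLeakyForcingSet (hI.symm ▸ h)⟩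

/-- Proposition `inddouble`: if `L` is a set of specified
leaks on `V(G)` with `I(L) = 1`, then `B` is an `L`-leaky forcing set iff `B` is
a specified `1`-leaky forcing set. -/
theorem statement14 [Fintype V] [DecidableEq V] (G : SimpleGraph V)
    (L : Finset (V × V)) (hI : maxIndepLeaks L = 1) (B : Set V) :
    IsLLeakyForcingSet G (↑L) B ↔ IsSpecifiedLeakyForcingSet G 1 B :=
  statement14_general G L hI B
end

section
/- Let ℓ ≥ 2 and let G = K_{ℓ+1} □ K₂ be the Cartesian product of the complete graph on ℓ+1 vertices with K₂, with vertex set {x₁,…,x_{ℓ+1}, y₁,…,y_{ℓ+1}}, where {x₁,…,x_{ℓ+1}} induces a clique, {y₁,…,y_{ℓ+1}} induces a clique, and the edges x_i y_i (1 ≤ i ≤ ℓ+1) form a perfect matching. Then the set B = {x₁,…,x_{ℓ+1}} is not a specified 2-leaky forcing set of G: the set of specified leaks {x₁→y₁, x₂→y₂} prevents B from coloring y₁ and y₂ blue. -/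
/-!
Zero forcing with leaks (vertex leaks, edge leaks, specified leaks, mixed leaks).

A force `u → v` is modelled as the ordered pair `(u, v) : V × V`.  All the
leak notions are encoded by a set `P` of *prohibited* forces.
-/

variable {V : Type*}

/-!
A white set `F` stays white when every vertex outside `F` that could force its way into `F` sees
at least two vertices of `F`. Any two vertices of a clique form such a set within the clique; lifted
to the `y`-layer of the prism, the only vertices that see just one of `y₁, y₂` are the partners
`x₁, x₂`, and exactly their two forces are prohibited.
-/

/-- A leaky fort of `G` relative to the prohibited forces `P`: a set `F` such that no vertex outside
`F` has a unique neighbor in `F`, unless the force to that neighbor is prohibited. For `P = ∅` this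
is a fort in the usual sense of zero forcing, except that `F` may be empty. -/
def IsLeakyFort (G : SimpleGraph V) (P : Set (V × V)) (F : Set V) : Prop :=
  ∀ u ∉ F, ∀ v ∈ F, G.Adj u v → (u, v) ∉ P → ∃ w ∈ F, w ≠ v ∧ G.Adj u w

theorem IsLeakyFort.disjoint_closureSet {G : SimpleGraph V} {P : Set (V × V)} {B F : Set V}
    (hF : IsLeakyFort G P F) (hBF : Disjoint B F) : Disjoint (closureSet G P B) F := by
  refine Set.disjoint_left.2 fun v hv => ?_
  induction hv with
  | init hvB => exact Set.disjoint_left.1 hBF hvB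
  | force hadj hP _ _ huF hothers =>
    intro hvF
    obtain ⟨w, hwF, hne, hadj'⟩ := hF _ huF _ hvF hadj hP
    exact hothers w hadj' hne hwF

theorem IsLeakyFort.not_isSpecifiedLeakyForcingSet {G : SimpleGraph V} {L : Finset (V × V)}
    {B F : Set V} (hF : IsLeakyFort G L F) (hne : F.Nonempty) (hBF : Disjoint B F)
    (hL : ∀ p ∈ L, G.Adj p.1 p.2) : ¬ IsSpecifiedLeakyForcingSet G L.card B := by
  intro hB
  have hdisj := hF.disjoint_closureSet hBF
  rw [hB L hL le_rfl, Set.univ_disjoint] at hdisj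
  exact hne.ne_empty hdisj

theorem isLeakyFort_top {F : Set V} (hF : F.Nontrivial) (P : Set (V × V)) :
    IsLeakyFort ⊤ P F := by
  intro u hu v _ _ _
  obtain ⟨w, hwF, hne⟩ := hF.exists_ne v
  exact ⟨w, hwF, hne, fun huw => hu (huw ▸ hwF)⟩

theorem IsLeakyFort.boxProd {U W : Type*} {H : SimpleGraph U} {K : SimpleGraph W} {F : Set U}
    {k : W} {P : Set ((U × W) × (U × W))} (hF : IsLeakyFort H ∅ F)
    (hP : ∀ f ∈ F, ∀ j, K.Adj j k → ((f, j), (f, k)) ∈ P) :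
    IsLeakyFort (H.boxProd K) P (F ×ˢ {k}) := by
  rintro ⟨u, j⟩ hu ⟨v, _⟩ ⟨hv, rfl⟩ hadj hnotP
  rcases SimpleGraph.boxProd_adj.1 hadj with ⟨huv, rfl⟩ | ⟨hjk, rfl⟩
  · have huF : u ∉ F := fun huF => hu ⟨huF, rfl⟩
    obtain ⟨w, hwF, hne, huw⟩ := hF u huF v hv huv (Set.notMem_empty _)
    exact ⟨(w, j), ⟨hwF, rfl⟩, fun h => hne (congrArg Prod.fst h),
      SimpleGraph.boxProd_adj_left.2 huw⟩
  · exact absurd (hP u hv j hjk) hnotP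

theorem statement15_general {U : Type*} (H : SimpleGraph U) (F : Finset U) (hne : F.Nonempty)
    (hF : IsLeakyFort H ∅ F) :
    ¬ IsSpecifiedLeakyForcingSet (H.boxProd (⊤ : SimpleGraph (Fin 2))) F.card {p | p.2 = 0} ∧
      ∀ f ∈ F, (f, (1 : Fin 2)) ∉ closureSet (H.boxProd (⊤ : SimpleGraph (Fin 2)))
        ((fun i => ((i, 0), (i, 1))) '' F) {p | p.2 = 0} := by
  classical
  let leak : U → (U × Fin 2) × (U × Fin 2) := fun i => ((i, 0), (i, 1))
  have hleak : Function.Injective leak := fun _ _ h => congrArg (fun p => p.1.1) h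
  have hfort : IsLeakyFort (H.boxProd ⊤) (leak '' F) ((F : Set U) ×ˢ {(1 : Fin 2)}) := by
    refine hF.boxProd fun f hf j hj => ?_
    have hj1 : j ≠ 1 := hj.ne
    obtain rfl : j = 0 := by omega
    exact ⟨f, hf, rfl⟩
  have hdisj : Disjoint {p : U × Fin 2 | p.2 = 0} ((F : Set U) ×ˢ {1}) :=
    Set.disjoint_left.2 fun p hp0 hp1 => zero_ne_one (hp0.symm.trans hp1.2)
  constructor
  · rw [← Finset.card_image_of_injective F hleak]
    rw [← Finset.coe_image] at hfort
    have hnonempty := hne.to_set.prod (Set.singleton_nonempty (1 : Fin 2))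
    exact hfort.not_isSpecifiedLeakyForcingSet hnonempty hdisj (by simp [leak])
  · exact fun f hf hforced =>
      Set.disjoint_left.1 (hfort.disjoint_closureSet hdisj) hforced ⟨hf, rfl⟩

/-- in `G = K_{ℓ+1} □ K₂` (`ℓ ≥ 2`), with `x_i = (i, 0)` and
`y_i = (i, 1)`, the set `B = {x_i}` is not a specified `2`-leaky forcing set:
the specified leaks `{x₁→y₁, x₂→y₂}` prevent `B` from coloring `y₁, y₂` blue. -/
theorem statement15 (ℓ : ℕ) (hℓ : 2 ≤ ℓ)
    (G : SimpleGraph (Fin (ℓ + 1) × Fin 2))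
    (hG : G = SimpleGraph.boxProd (⊤ : SimpleGraph (Fin (ℓ + 1))) (⊤ : SimpleGraph (Fin 2)))
    (B : Set (Fin (ℓ + 1) × Fin 2)) (hB : B = {p | p.2 = 0})
    (L : Set ((Fin (ℓ + 1) × Fin 2) × (Fin (ℓ + 1) × Fin 2)))
    (hL : L = {(((0 : Fin (ℓ + 1)), (0 : Fin 2)), ((0 : Fin (ℓ + 1)), (1 : Fin 2))),
               (((1 : Fin (ℓ + 1)), (0 : Fin 2)), ((1 : Fin (ℓ + 1)), (1 : Fin 2)))}) :
    ¬ IsSpecifiedLeakyForcingSet G 2 B ∧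
      ((0 : Fin (ℓ + 1)), (1 : Fin 2)) ∉ closureSet G L B ∧
      ((1 : Fin (ℓ + 1)), (1 : Fin 2)) ∉ closureSet G L B := by
  have h01 : (0 : Fin (ℓ + 1)) ≠ 1 := by rw [Ne, Fin.zero_eq_one_iff]; omega
  have hfort : IsLeakyFort ⊤ ∅ (({0, 1} : Finset (Fin (ℓ + 1))) : Set (Fin (ℓ + 1))) :=
    isLeakyFort_top (by simpa using Set.nontrivial_pair h01) ∅
  subst hG hB hL
  simpa [Finset.card_pair h01, Set.image_pair] using
    statement15_general ⊤ {0, 1} (Finset.insert_nonempty 0 {1}) hfort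
end
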